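/- Assume m₂ + k₂(p-2) > 1 (so γ₂ > 0). Let a > 0, b = [p (γ₁γ₂)^{p-1} k₂^{p-2}]^{-1/(p-1)}, ξ_b = (a/b)^{1/γ₁}, and f̄(ξ) = (a - b ξ^{γ₁})^{γ₂}. (i) If l₇ > 0, γ₂(β₂-1) ≥ 0 and s/p ≥ (1 + a^{γ₂(β₂-1)})/l₇, then (A f̄)(ξ) ≤ 0 for all ξ ∈ (0, ξ_b). (ii) If l₇ < 0, then (A f̄)(ξ) ≤ 0 for all ξ ∈ (0, ξ_b). -/

import Mathlib

open Real Set Filter Topology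

/-- The self-similar operator
`(Af)(ξ) = ξ^{1-s} (ξ^{s-1} f^{m₂-1} |(f^{k₂})'|^{p-2} f')' + (ξ/p) f' + (f + f^{β₂})/l₇`. -/
noncomputable def selfSimOp (p m₂ k₂ β₂ s l₇ : ℝ) (f : ℝ → ℝ) (ξ : ℝ) : ℝ :=
  ξ ^ (1 - s) *
      deriv (fun x => x ^ (s - 1) * f x ^ (m₂ - 1) *
        |deriv (fun y => f y ^ k₂) x| ^ (p - 2) * deriv f x) ξ
    + (ξ / p) * deriv f ξ + (f ξ + f ξ ^ β₂) / l₇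

/-!
The powers `γ₁`, `γ₂` and the constant `b` are exactly those for which the flux of the profile
`f̄ = (a - b ξ^{γ₁})^{γ₂}` collapses to `-(1/p) ξ^s f̄`. The weighted divergence of this flux is
`-(s/p) f̄ - (ξ/p) f̄'`, whose second term cancels the drift, so that
`A f̄ = -(s/p) f̄ + (f̄ + f̄^{β₂})/l₇`. The sign of this expression is immediate when `l₇ < 0`; when
`l₇ > 0` factor out `f̄` and use `f̄ ≤ a^{γ₂}`.
-/

/-- The flux `x^{s-1} f^{m-1} |(f^k)'|^{p-2} f'` whose weighted divergence is the diffusion term of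
`selfSimOp`. -/
noncomputable def selfSimFlux (p m k s : ℝ) (f : ℝ → ℝ) (x : ℝ) : ℝ :=
  x ^ (s - 1) * f x ^ (m - 1) * |deriv (fun y => f y ^ k) x| ^ (p - 2) * deriv f x

/-- The Zel'dovich–Kompaneets–Barenblatt profile `(a - b x^γ)^δ`. It is not truncated at the edge of
its support, so it is only meaningful where `a - b x^γ` is positive. -/
noncomputable def zkbProfile (a b γ δ x : ℝ) : ℝ :=
  (a - b * x ^ γ) ^ δ

/-- The coefficient `b` of the profile `(a - b x^γ)^δ` that normalizes its flux, in the sense that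
`k^{p-2} (b γ δ)^{p-1} = 1/p`. -/
noncomputable def zkbCoeff (p k γ δ : ℝ) : ℝ :=
  (p * (γ * δ) ^ (p - 1) * k ^ (p - 2)) ^ (-1 / (p - 1))

theorem selfSimOp_eq_of_selfSimFlux_eventuallyEq {p m k β s l ξ : ℝ} {f : ℝ → ℝ} (hξ : 0 < ξ)
    (hf : DifferentiableAt ℝ f ξ)
    (hflux : selfSimFlux p m k s f =ᶠ[𝓝 ξ] fun x => -(1 / p) * (x ^ s * f x)) :
    selfSimOp p m k β s l f ξ = -(s / p) * f ξ + (f ξ + f ξ ^ β) / l := by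
  have hasDerivAt_flux : HasDerivAt (selfSimFlux p m k s f)
      (-(1 / p) * (s * ξ ^ (s - 1) * f ξ + ξ ^ s * deriv f ξ)) ξ :=
    (((hasDerivAt_rpow_const (Or.inl hξ.ne')).mul hf.hasDerivAt).const_mul _).congr_of_eventuallyEq
      hflux
  have weight_mul_pred : ξ ^ (1 - s) * ξ ^ (s - 1) = 1 := by
    rw [← rpow_add hξ, sub_add_sub_cancel', sub_self, rpow_zero]
  have weight_mul : ξ ^ (1 - s) * ξ ^ s = ξ := by
    rw [← rpow_add hξ, sub_add_cancel, rpow_one]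
  calc selfSimOp p m k β s l f ξ
      = ξ ^ (1 - s) * deriv (selfSimFlux p m k s f) ξ + ξ / p * deriv f ξ
          + (f ξ + f ξ ^ β) / l := rfl
    _ = -(s / p) * f ξ + (f ξ + f ξ ^ β) / l := by
        rw [hasDerivAt_flux.deriv]
        linear_combination
          -(1 / p) * s * f ξ * weight_mul_pred - 1 / p * deriv f ξ * weight_mul

section Profile

variable {a b γ δ x : ℝ}

theorem zkbProfile_pos (hpos : 0 < a - b * x ^ γ) : 0 < zkbProfile a b γ δ x :=
  rpow_pos_of_pos hpos δ

theorem zkbProfile_rpow (hnonneg : 0 ≤ a - b * x ^ γ) (c : ℝ) :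
    zkbProfile a b γ δ x ^ c = (a - b * x ^ γ) ^ (δ * c) :=
  (rpow_mul hnonneg δ c).symm

theorem sub_mul_rpow_pos_of_lt (ha : 0 ≤ a) (hb : 0 < b) (hγ : 0 < γ) (hx : 0 ≤ x)
    (hlt : x < (a / b) ^ (1 / γ)) : 0 < a - b * x ^ γ := by
  rw [one_div, lt_rpow_inv_iff_of_pos hx (by positivity) hγ, lt_div_iff₀' hb] at hlt
  exact sub_pos.mpr hlt

theorem eventually_sub_mul_rpow_pos (hx : x ≠ 0) (hpos : 0 < a - b * x ^ γ) :
    ∀ᶠ y in 𝓝 x, 0 < a - b * y ^ γ :=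
  (((continuousAt_rpow_const x γ (Or.inl hx)).const_mul b).const_sub a).eventually_const_lt hpos

theorem hasDerivAt_zkbProfile (hx : x ≠ 0) (hne : a - b * x ^ γ ≠ 0) :
    HasDerivAt (zkbProfile a b γ δ)
      (-(b * γ * δ * x ^ (γ - 1) * (a - b * x ^ γ) ^ (δ - 1))) x := by
  have hasDerivAt_base : HasDerivAt (fun y => a - b * y ^ γ) (-(b * (γ * x ^ (γ - 1)))) x :=
    ((hasDerivAt_rpow_const (Or.inl hx)).const_mul b).const_sub a
  exact (hasDerivAt_base.rpow_const (Or.inl hne)).congr_deriv (by ring)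

theorem deriv_zkbProfile_rpow (hx : x ≠ 0) (hpos : 0 < a - b * x ^ γ) (k : ℝ) :
    deriv (fun y => zkbProfile a b γ δ y ^ k) x =
      -(k * (b * γ * δ) * x ^ (γ - 1) * (a - b * x ^ γ) ^ (δ * k - 1)) := by
  have rpow_eq : (fun y => zkbProfile a b γ δ y ^ k) =ᶠ[𝓝 x] zkbProfile a b γ (δ * k) :=
    (eventually_sub_mul_rpow_pos hx hpos).mono fun _ hy => zkbProfile_rpow hy.le k
  rw [rpow_eq.deriv_eq, (hasDerivAt_zkbProfile hx hpos.ne').deriv]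
  ring

theorem selfSimFlux_zkbProfile {k : ℝ} (p m s : ℝ) (hk : 0 < k) (hbγδ : 0 < b * γ * δ)
    (hx : 0 < x) (hpos : 0 < a - b * x ^ γ) :
    selfSimFlux p m k s (zkbProfile a b γ δ) x =
      -(k ^ (p - 2) * (b * γ * δ) ^ (p - 1)) *
        (x ^ (s - 1 + (γ - 1) * (p - 1)) *
          (a - b * x ^ γ) ^ (δ * (m + k * (p - 2)) - (p - 1))) := by
  rw [selfSimFlux, zkbProfile_rpow hpos.le, deriv_zkbProfile_rpow hx.ne' hpos,
    (hasDerivAt_zkbProfile hx.ne' hpos.ne').deriv]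
  set u := a - b * x ^ γ
  set c := b * γ * δ
  have abs_rpow : |-(k * c * x ^ (γ - 1) * u ^ (δ * k - 1))| ^ (p - 2) =
      k ^ (p - 2) * c ^ (p - 2) * x ^ ((γ - 1) * (p - 2)) * u ^ ((δ * k - 1) * (p - 2)) := by
    rw [abs_neg, abs_of_pos (by positivity), mul_rpow (by positivity) (by positivity),
      mul_rpow (by positivity) (by positivity), mul_rpow hk.le hbγδ.le, ← rpow_mul hx.le,
      ← rpow_mul hpos.le]
  have coeff_split : c ^ (p - 1) = c ^ (p - 2) * c := by
    rw [← rpow_add_one hbγδ.ne']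
    ring_nf
  have x_split : x ^ (s - 1 + (γ - 1) * (p - 1)) =
      x ^ (s - 1) * x ^ ((γ - 1) * (p - 2)) * x ^ (γ - 1) := by
    rw [← rpow_add hx, ← rpow_add hx]
    ring_nf
  have u_split : u ^ (δ * (m + k * (p - 2)) - (p - 1)) =
      u ^ (δ * (m - 1)) * u ^ ((δ * k - 1) * (p - 2)) * u ^ (δ - 1) := by
    rw [← rpow_add hpos, ← rpow_add hpos]
    ring_nf
  rw [abs_rpow, coeff_split, x_split, u_split]
  ring

end Profile

section Coefficient

variable {p k γ δ : ℝ}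

theorem zkbCoeff_pos (hp : 0 < p) (hk : 0 < k) (hγδ : 0 < γ * δ) : 0 < zkbCoeff p k γ δ := by
  unfold zkbCoeff
  positivity

theorem rpow_mul_zkbCoeff_rpow (hp : 1 < p) (hk : 0 < k) (hγδ : 0 < γ * δ) :
    k ^ (p - 2) * (zkbCoeff p k γ δ * γ * δ) ^ (p - 1) = 1 / p := by
  have hp₀ : 0 < p := one_pos.trans hp
  have coeff_rpow : zkbCoeff p k γ δ ^ (p - 1) = (p * (γ * δ) ^ (p - 1) * k ^ (p - 2))⁻¹ := by
    rw [zkbCoeff, ← rpow_mul (by positivity), div_mul_cancel₀ _ (sub_pos.mpr hp).ne', rpow_neg_one]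
  have hγδ_rpow : (γ * δ) ^ (p - 1) ≠ 0 := by positivity
  have hk_rpow : k ^ (p - 2) ≠ 0 := by positivity
  rw [mul_assoc (zkbCoeff p k γ δ), mul_rpow (zkbCoeff_pos hp₀ hk hγδ).le hγδ.le, coeff_rpow]
  field_simp

end Coefficient

theorem selfSimOp_zkbProfile {p m k β s l a b γ δ ξ : ℝ} (hk : 0 < k) (hbγδ : 0 < b * γ * δ)
    (hγ : (γ - 1) * (p - 1) = 1) (hδ : δ * (m + k * (p - 2) - 1) = p - 1)
    (hb : k ^ (p - 2) * (b * γ * δ) ^ (p - 1) = 1 / p)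
    (hξ : 0 < ξ) (hpos : 0 < a - b * ξ ^ γ) :
    selfSimOp p m k β s l (zkbProfile a b γ δ) ξ =
      -(s / p) * zkbProfile a b γ δ ξ
        + (zkbProfile a b γ δ ξ + zkbProfile a b γ δ ξ ^ β) / l := by
  refine selfSimOp_eq_of_selfSimFlux_eventuallyEq hξ
    (hasDerivAt_zkbProfile hξ.ne' hpos.ne').differentiableAt ?_
  filter_upwards [lt_mem_nhds hξ, eventually_sub_mul_rpow_pos hξ.ne' hpos] with x hx hxpos
  have x_exponent : s - 1 + (γ - 1) * (p - 1) = s := by rw [hγ, sub_add_cancel]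
  have u_exponent : δ * (m + k * (p - 2)) - (p - 1) = δ := by rw [← hδ]; ring
  rw [selfSimFlux_zkbProfile p m s hk hbγδ hx hxpos, hb, x_exponent, u_exponent, zkbProfile]

theorem neg_mul_add_div_nonpos_of_rpow_le {σ l β y M : ℝ} (hl : 0 < l) (hy : 0 < y)
    (hM : y ^ (β - 1) ≤ M) (hσ : (1 + M) / l ≤ σ) : -σ * y + (y + y ^ β) / l ≤ 0 := by
  have rpow_split : y ^ β = y * y ^ (β - 1) := by
    rw [rpow_sub_one hy.ne', mul_div_cancel₀ _ hy.ne']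
  have bracket_nonpos : (1 + y ^ (β - 1)) / l - σ ≤ 0 :=
    sub_nonpos.mpr (le_trans (by gcongr) hσ)
  calc -σ * y + (y + y ^ β) / l = y * ((1 + y ^ (β - 1)) / l - σ) := by rw [rpow_split]; ring
    _ ≤ 0 := mul_nonpos_of_nonneg_of_nonpos hy.le bracket_nonpos

theorem neg_mul_add_div_nonpos_of_neg {σ l y : ℝ} (β : ℝ) (hσ : 0 ≤ σ) (hl : l < 0) (hy : 0 ≤ y) :
    -σ * y + (y + y ^ β) / l ≤ 0 :=
  add_nonpos (mul_nonpos_of_nonpos_of_nonneg (neg_nonpos.mpr hσ) hy)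
    (div_nonpos_of_nonneg_of_nonpos (by positivity) hl.le)

theorem stmt6_general {p m₂ k₂ β₂ s l₇ γ₁ γ₂ a b ξb : ℝ} (hp : 1 < p) (hk₂ : 0 < k₂)
    (hγ₁ : γ₁ = p / (p - 1)) (hγ₂ : γ₂ = (p - 1) / (m₂ + k₂ * (p - 2) - 1))
    (hslow : 1 < m₂ + k₂ * (p - 2)) (ha : 0 < a) (hb : b = zkbCoeff p k₂ γ₁ γ₂)
    (hξb : ξb = (a / b) ^ (1 / γ₁)) :
    (0 < l₇ → 0 ≤ γ₂ * (β₂ - 1) → (1 + a ^ (γ₂ * (β₂ - 1))) / l₇ ≤ s / p →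
      ∀ ξ ∈ Ioo 0 ξb, selfSimOp p m₂ k₂ β₂ s l₇ (zkbProfile a b γ₁ γ₂) ξ ≤ 0) ∧
    (l₇ < 0 → 0 ≤ s →
      ∀ ξ ∈ Ioo 0 ξb, selfSimOp p m₂ k₂ β₂ s l₇ (zkbProfile a b γ₁ γ₂) ξ ≤ 0) := by
  have hp₀ : 0 < p := one_pos.trans hp
  have hp₁ : 0 < p - 1 := sub_pos.mpr hp
  have hslow' : 0 < m₂ + k₂ * (p - 2) - 1 := sub_pos.mpr hslow
  have hγ₁pos : 0 < γ₁ := hγ₁ ▸ div_pos hp₀ hp₁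
  have hγ₂pos : 0 < γ₂ := hγ₂ ▸ div_pos hp₁ hslow'
  have hγpos : 0 < γ₁ * γ₂ := mul_pos hγ₁pos hγ₂pos
  have hbpos : 0 < b := hb ▸ zkbCoeff_pos hp₀ hk₂ hγpos
  have γ₁_conj : (γ₁ - 1) * (p - 1) = 1 := by rw [hγ₁]; field_simp; ring
  have γ₂_mul : γ₂ * (m₂ + k₂ * (p - 2) - 1) = p - 1 := by
    rw [hγ₂, div_mul_cancel₀ _ hslow'.ne']
  have base_pos : ∀ ξ ∈ Ioo 0 ξb, 0 < a - b * ξ ^ γ₁ := fun ξ hξ =>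
    sub_mul_rpow_pos_of_lt ha.le hbpos hγ₁pos hξ.1.le (hξb ▸ hξ.2)
  have op_eq : ∀ ξ ∈ Ioo 0 ξb, selfSimOp p m₂ k₂ β₂ s l₇ (zkbProfile a b γ₁ γ₂) ξ =
      -(s / p) * zkbProfile a b γ₁ γ₂ ξ
        + (zkbProfile a b γ₁ γ₂ ξ + zkbProfile a b γ₁ γ₂ ξ ^ β₂) / l₇ := fun ξ hξ =>
    selfSimOp_zkbProfile hk₂ (by positivity) γ₁_conj γ₂_mul
      (hb ▸ rpow_mul_zkbCoeff_rpow hp hk₂ hγpos) hξ.1 (base_pos ξ hξ)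
  refine ⟨fun hl hβ hsource ξ hξ => ?_, fun hl hs ξ hξ => ?_⟩ <;> rw [op_eq ξ hξ]
  · refine neg_mul_add_div_nonpos_of_rpow_le hl (zkbProfile_pos (base_pos ξ hξ)) ?_ hsource
    have base_le : a - b * ξ ^ γ₁ ≤ a :=
      sub_le_self a (mul_nonneg hbpos.le (rpow_nonneg hξ.1.le γ₁))
    rw [zkbProfile_rpow (base_pos ξ hξ).le]
    exact rpow_le_rpow (base_pos ξ hξ).le base_le hβ
  · exact neg_mul_add_div_nonpos_of_neg β₂ (div_nonneg hs hp₀.le) hl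
      (zkbProfile_pos (base_pos ξ hξ)).le

/-- The ZKB profile `f̄(ξ) = (a - b ξ^{γ₁})^{γ₂}` is a supersolution: `(A f̄)(ξ) ≤ 0` on
`(0, ξ_b)`, (i) when `l₇ > 0`, `γ₂(β₂-1) ≥ 0` and `s/p ≥ (1 + a^{γ₂(β₂-1)})/l₇`, and
(ii) when `l₇ < 0`. -/
theorem stmt6
    (p q k m N n n₁ l β : ℝ)
    (hp : 2 ≤ p) (hq0 : 0 < q) (hq1 : q < 1) (hk : 1 ≤ k) (hm : 1 ≤ m)
    (hn0 : 0 ≤ n) (hnN : n < N) (hpn : n + n₁ < p)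
    (m₂ k₂ β₂ s l₅ l₇ γ₁ γ₂ : ℝ)
    (hm₂ : m₂ = m / (1 - q)) (hk₂ : k₂ = k / (1 - q))
    (hβ₂ : β₂ = (β - q) / (1 - q))
    (hs : s = p * (N - n) / (p - n - n₁))
    (hl₅ : l₅ = (1 + l) * (m₂ + k₂ * (p - 2) - 1))
    (hl₇def : l₇ = -(l₅ + 1 - β₂) / (1 + l))
    (hγ₁ : γ₁ = p / (p - 1)) (hγ₂ : γ₂ = (p - 1) / (m₂ + k₂ * (p - 2) - 1))
    (hslow : 1 < m₂ + k₂ * (p - 2))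
    (a b ξb : ℝ) (ha : 0 < a)
    (hb : b = (p * (γ₁ * γ₂) ^ (p - 1) * k₂ ^ (p - 2)) ^ (-1 / (p - 1)))
    (hξb : ξb = (a / b) ^ (1 / γ₁)) :
    (0 < l₇ → 0 ≤ γ₂ * (β₂ - 1) → (1 + a ^ (γ₂ * (β₂ - 1))) / l₇ ≤ s / p →
      ∀ ξ ∈ Ioo (0 : ℝ) ξb,
        selfSimOp p m₂ k₂ β₂ s l₇ (fun x => (a - b * x ^ γ₁) ^ γ₂) ξ ≤ 0) ∧
    (l₇ < 0 →
      ∀ ξ ∈ Ioo (0 : ℝ) ξb,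
        selfSimOp p m₂ k₂ β₂ s l₇ (fun x => (a - b * x ^ γ₁) ^ γ₂) ξ ≤ 0) := by
  have hk₂pos : 0 < k₂ := hk₂ ▸ div_pos (by linarith) (by linarith)
  have hspos : 0 < s := hs ▸ div_pos (mul_pos (by linarith) (by linarith)) (by linarith)
  obtain ⟨source, sink⟩ := stmt6_general (β₂ := β₂) (s := s) (l₇ := l₇) (by linarith : 1 < p)
    hk₂pos hγ₁ hγ₂ hslow ha hb hξb
  exact ⟨source, fun hl => sink hl hspos.le⟩
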